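/- On an almost quaternion-Hermitian 4n-manifold, for any local adapted basis I,J,K the one-form Iλ_I is determined by the exterior derivatives of the Kähler forms: 2n·Iλ_I = IΛ_K dω_J + JΛ_K dω_I + JΛ_I dω_K = IΛ_K dω_J + Λ_I dω_I − Λ_K dω_K, together with the formulas obtained by cyclic permutation of (I,J,K). -/

import Mathlib

/-!  Synthetic (Koszul-style) model of an almost quaternion-Hermitian `4n`-manifold.

`C` plays the role of the commutative ℝ-algebra of smooth functions and `V` that of
the `C`-module of vector fields, equipped with a directional derivative `D`, a Lie
bracket, a Riemannian metric `g` together with its Levi-Civita connection `nab`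
(characterised by being torsion-free and metric), a local adapted basis `I, J, K`
of anticommuting almost complex structures with `K = I J`, each compatible with the
metric, and a (local) orthonormal frame.  -/

noncomputable section

open scoped BigOperators

structure AQH (n : ℕ) (C : Type*) (V : Type*) [CommRing C] [Algebra ℝ C]
    [AddCommGroup V] [Module C V] where
  /-- derivative of a function along a vector field -/
  D : V → C → C
  D_add : ∀ X f g, D X (f + g) = D X f + D X g
  D_mul : ∀ X f g, D X (f * g) = f * D X g + g * D X f
  D_const : ∀ X (r : ℝ), D X (algebraMap ℝ C r) = 0
  D_addX : ∀ X Y f, D (X + Y) f = D X f + D Y f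
  D_smulX : ∀ (f : C) (X : V) (h : C), D (f • X) h = f * D X h
  /-- the Lie bracket of vector fields -/
  bracket : V → V → V
  bracket_skew : ∀ X Y, bracket X Y = -bracket Y X
  bracket_add : ∀ X Y Z, bracket X (Y + Z) = bracket X Y + bracket X Z
  bracket_smul : ∀ X (f : C) Y, bracket X (f • Y) = f • bracket X Y + (D X f) • Y
  bracket_jacobi : ∀ X Y Z,
    bracket X (bracket Y Z) + bracket Y (bracket Z X) + bracket Z (bracket X Y) = 0
  D_bracket : ∀ X Y f, D (bracket X Y) f = D X (D Y f) - D Y (D X f)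
  /-- the Riemannian metric -/
  g : V → V → C
  g_symm : ∀ X Y, g X Y = g Y X
  g_add : ∀ X Y Z, g (X + Y) Z = g X Z + g Y Z
  g_smul : ∀ (f : C) X Y, g (f • X) Y = f * g X Y
  /-- the Levi-Civita connection -/
  nab : V → V → V
  nab_addX : ∀ X Y Z, nab (X + Y) Z = nab X Z + nab Y Z
  nab_smulX : ∀ (f : C) X Y, nab (f • X) Y = f • nab X Y
  nab_add : ∀ X Y Z, nab X (Y + Z) = nab X Y + nab X Z
  nab_leibniz : ∀ X (f : C) Y, nab X (f • Y) = f • nab X Y + (D X f) • Y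
  torsion_free : ∀ X Y, nab X Y - nab Y X = bracket X Y
  nab_metric : ∀ X Y Z, D X (g Y Z) = g (nab X Y) Z + g Y (nab X Z)
  /-- the (local) adapted basis of almost complex structures -/
  I : V → V
  J : V → V
  K : V → V
  I_lin : ∀ (f : C) X Y, I (f • X + Y) = f • I X + I Y
  J_lin : ∀ (f : C) X Y, J (f • X + Y) = f • J X + J Y
  K_lin : ∀ (f : C) X Y, K (f • X + Y) = f • K X + K Y
  I_sq : ∀ X, I (I X) = -X
  J_sq : ∀ X, J (J X) = -X
  K_def : ∀ X, K X = I (J X)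
  anticomm : ∀ X, I (J X) = -J (I X)
  I_metric : ∀ X Y, g (I X) (I Y) = g X Y
  J_metric : ∀ X Y, g (J X) (J Y) = g X Y
  /-- a (local) orthonormal frame -/
  frame : Fin (4 * n) → V
  frame_orthonormal : ∀ i j, g (frame i) (frame j) = if i = j then 1 else 0
  frame_span : ∀ X, X = ∑ i, g X (frame i) • frame i

namespace AQH

section ops

variable {C V : Type*} [CommRing C]

/-- the operator `A_(1)` on covariant 3-tensors -/
def op1 (A : V → V) (ψ : V → V → V → C) : V → V → V → C := fun X Y Z => -ψ (A X) Y Z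

/-- the operator `A_(2)` on covariant 3-tensors -/
def op2 (A : V → V) (ψ : V → V → V → C) : V → V → V → C := fun X Y Z => -ψ X (A Y) Z

/-- the operator `A_(3)` on covariant 3-tensors -/
def op3 (A : V → V) (ψ : V → V → V → C) : V → V → V → C := fun X Y Z => -ψ X Y (A Z)

/-- the operator `A_(12) = A_(1) A_(2)` on covariant 3-tensors -/
def op12 (A : V → V) (ψ : V → V → V → C) : V → V → V → C := fun X Y Z => ψ (A X) (A Y) Z

/-- the operator `A_(13) = A_(1) A_(3)` on covariant 3-tensors -/
def op13 (A : V → V) (ψ : V → V → V → C) : V → V → V → C := fun X Y Z => ψ (A X) Y (A Z)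

/-- the operator `A_(23) = A_(2) A_(3)` on covariant 3-tensors -/
def op23 (A : V → V) (ψ : V → V → V → C) : V → V → V → C := fun X Y Z => ψ X (A Y) (A Z)

/-- the operator `𝓛_A = A_(12) + A_(13) + A_(23)` on three-forms -/
def calL (A : V → V) (ψ : V → V → V → C) : V → V → V → C :=
  fun X Y Z => op12 A ψ X Y Z + op13 A ψ X Y Z + op23 A ψ X Y Z

/-- the action `(A ν)(X) = -ν (A X)` of `A` on a one-form -/
def act1 (A : V → V) (ν : V → C) : V → C := fun X => -ν (A X)

/-- the action `(A ψ)(X,Y,Z) = -ψ(AX,AY,AZ)` of `A` on a three-form -/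
def act3 (A : V → V) (ψ : V → V → V → C) : V → V → V → C :=
  fun X Y Z => -ψ (A X) (A Y) (A Z)

/-- wedge product of two one-forms -/
def wedge11 (α β : V → C) : V → V → C := fun X Y => α X * β Y - α Y * β X

/-- wedge product of a one-form and a two-form -/
def wedge12 (ν : V → C) (ω : V → V → C) : V → V → V → C :=
  fun X Y Z => ν X * ω Y Z - ν Y * ω X Z + ν Z * ω X Y

/-- wedge product of two two-forms -/
def wedge22 (α β : V → V → C) : V → V → V → V → C := fun X Y Z W =>
  α X Y * β Z W - α X Z * β Y W + α X W * β Y Z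
    + α Z W * β X Y - α Y W * β X Z + α Y Z * β X W

/-- a (0,3)-tensor is an alternating three-form -/
def IsAlt3 (T : V → V → V → C) : Prop :=
  (∀ X Y Z, T Y X Z = -T X Y Z) ∧ (∀ X Y Z, T X Z Y = -T X Y Z)

variable [AddCommGroup V] [Module C V]

/-- `C`-linearity (tensoriality) of a three-form in its first argument -/
def Lin3 (T : V → V → V → C) : Prop :=
  ∀ (f : C) X X' Y Z, T (f • X + X') Y Z = f * T X Y Z + T X' Y Z

/-- `C`-linearity (tensoriality) of a one-form -/
def Lin1 (ν : V → C) : Prop := ∀ (f : C) X X', ν (f • X + X') = f * ν X + ν X'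

end ops

section derived

variable {n : ℕ} {C V : Type*} [CommRing C] [Algebra ℝ C] [AddCommGroup V] [Module C V]
  [Module ℝ V] [IsScalarTower ℝ C V]

variable (M : AQH n C V)

/-- the Kähler form `ω_A(X,Y) = g(X, A Y)` -/
def omega (A : V → V) : V → V → C := fun X Y => M.g X (A Y)

/-- `(∇_X A) Y` -/
def nabA (A : V → V) : V → V → V := fun X Y => M.nab X (A Y) - A (M.nab X Y)

/-- covariant derivative of a 2-form: `(∇_X ψ)(Y,Z)` -/
def nab2 (ψ : V → V → C) : V → V → V → C :=
  fun X Y Z => M.D X (ψ Y Z) - ψ (M.nab X Y) Z - ψ Y (M.nab X Z)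

/-- covariant derivative of a 4-form -/
def nab4 (ψ : V → V → V → V → C) : V → V → V → V → V → C :=
  fun X Y Z W U => M.D X (ψ Y Z W U) - ψ (M.nab X Y) Z W U - ψ Y (M.nab X Z) W U
    - ψ Y Z (M.nab X W) U - ψ Y Z W (M.nab X U)

/-- exterior derivative of a one-form -/
def d1 (ν : V → C) : V → V → C :=
  fun X Y => M.D X (ν Y) - M.D Y (ν X) - ν (M.bracket X Y)

/-- exterior derivative of a two-form -/
def d2 (ψ : V → V → C) : V → V → V → C :=
  fun X Y Z => M.D X (ψ Y Z) - M.D Y (ψ X Z) + M.D Z (ψ X Y)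
    - ψ (M.bracket X Y) Z + ψ (M.bracket X Z) Y - ψ (M.bracket Y Z) X

/-- exterior derivative of a four-form -/
def d4 (ψ : V → V → V → V → C) : V → V → V → V → V → C := fun X Y Z W U =>
  M.D X (ψ Y Z W U) - M.D Y (ψ X Z W U) + M.D Z (ψ X Y W U) - M.D W (ψ X Y Z U)
      + M.D U (ψ X Y Z W)
    - ψ (M.bracket X Y) Z W U + ψ (M.bracket X Z) Y W U - ψ (M.bracket X W) Y Z U
      + ψ (M.bracket X U) Y Z W
    - ψ (M.bracket Y Z) X W U + ψ (M.bracket Y W) X Z U - ψ (M.bracket Y U) X Z W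
    - ψ (M.bracket Z W) X Y U + ψ (M.bracket Z U) X Y W
    - ψ (M.bracket W U) X Y Z

/-- the Nijenhuis tensor `N_A(X,Y)` -/
def nijV (A : V → V) : V → V → V := fun X Y =>
  M.bracket X Y + A (M.bracket (A X) Y) + A (M.bracket X (A Y)) - M.bracket (A X) (A Y)

/-- the Nijenhuis `(0,3)`-tensor `N_A(X,Y,Z) = g(X, N_A(Y,Z))` -/
def nij3 (A : V → V) : V → V → V → C := fun X Y Z => M.g X (M.nijV A Y Z)

/-- the induced inner product of two 2-forms,
`⟨ψ,φ⟩ = (1/2!) ψ(e_i,e_j) φ(e_i,e_j)` -/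
def inner2 (ψ φ : V → V → C) : C :=
  (1/2 : ℝ) • ∑ i, ∑ j, ψ (M.frame i) (M.frame j) * φ (M.frame i) (M.frame j)

/-- the contraction `(Λ_A β)(X) = ⟨X ⌟ β, ω_A⟩` of a three-form -/
def Lam (A : V → V) (β : V → V → V → C) : V → C :=
  fun X => (1/2 : ℝ) •
    ∑ i, ∑ j, β X (M.frame i) (M.frame j) * M.omega A (M.frame i) (M.frame j)

/-- `λ_I(X) = (1/2n) ⟨∇_X ω_J, ω_K⟩` -/
def lambdaI : V → C := fun X =>
  (1/(2*(n:ℝ))) • M.inner2 (fun Y Z => M.nab2 (M.omega M.J) X Y Z) (M.omega M.K)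

/-- `λ_J(X) = (1/2n) ⟨∇_X ω_K, ω_I⟩` -/
def lambdaJ : V → C := fun X =>
  (1/(2*(n:ℝ))) • M.inner2 (fun Y Z => M.nab2 (M.omega M.K) X Y Z) (M.omega M.I)

/-- `λ_K(X) = (1/2n) ⟨∇_X ω_I, ω_J⟩` -/
def lambdaK : V → C := fun X =>
  (1/(2*(n:ℝ))) • M.inner2 (fun Y Z => M.nab2 (M.omega M.I) X Y Z) (M.omega M.J)

/-- codifferential of a two-form -/
def codiff2 (ψ : V → V → C) : V → C := fun Z => -∑ i, M.nab2 ψ (M.frame i) (M.frame i) Z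

/-- codifferential of a four-form -/
def codiff4 (ψ : V → V → V → V → C) : V → V → V → C :=
  fun X Y Z => -∑ i, M.nab4 ψ (M.frame i) (M.frame i) X Y Z

/-- `β_I = J dω_J + K dω_K` -/
def betaI : V → V → V → C := fun X Y Z =>
  act3 M.J (M.d2 (M.omega M.J)) X Y Z + act3 M.K (M.d2 (M.omega M.K)) X Y Z

/-- `β_J = K dω_K + I dω_I` -/
def betaJ : V → V → V → C := fun X Y Z =>
  act3 M.K (M.d2 (M.omega M.K)) X Y Z + act3 M.I (M.d2 (M.omega M.I)) X Y Z

/-- `β_K = I dω_I + J dω_J` -/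
def betaK : V → V → V → C := fun X Y Z =>
  act3 M.I (M.d2 (M.omega M.I)) X Y Z + act3 M.J (M.d2 (M.omega M.J)) X Y Z

/-- the intrinsic torsion
`ξ_X Y = -(1/4) Σ_A A (∇_X A) Y + (1/2) Σ_A λ_A(X) A Y` -/
def xi : V → V → V := fun X Y =>
  (-(1/4 : ℝ)) • (M.I (M.nabA M.I X Y) + M.J (M.nabA M.J X Y) + M.K (M.nabA M.K X Y))
    + (1/2 : ℝ) • (M.lambdaI X • M.I Y + M.lambdaJ X • M.J Y + M.lambdaK X • M.K Y)

/-- the one-form `ν^I_4 = I Λ_I β_I` -/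
def nu4I : V → C := act1 M.I (M.Lam M.I M.betaI)

/-- the one-form `ν^J_4 = J Λ_J β_J` -/
def nu4J : V → C := act1 M.J (M.Lam M.J M.betaJ)

/-- the one-form `ν^K_4 = K Λ_K β_K` -/
def nu4K : V → C := act1 M.K (M.Lam M.K M.betaK)

/-- `ν^I_3`, determined by `J Λ_J β_I = (1/(2n-1)) (ν^I_4 + (2n+1)(n-1) ν^I_3)` -/
def nu3I : V → C := fun X =>
  (1/((2*(n:ℝ)+1) * ((n:ℝ)-1))) •
    ((2*(n:ℝ)-1) • act1 M.J (M.Lam M.J M.betaI) X - M.nu4I X)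

/-- `ν^J_3`, determined by `K Λ_K β_J = (1/(2n-1)) (ν^J_4 + (2n+1)(n-1) ν^J_3)` -/
def nu3J : V → C := fun X =>
  (1/((2*(n:ℝ)+1) * ((n:ℝ)-1))) •
    ((2*(n:ℝ)-1) • act1 M.K (M.Lam M.K M.betaJ) X - M.nu4J X)

/-- `ν^K_3`, determined by `I Λ_I β_K = (1/(2n-1)) (ν^K_4 + (2n+1)(n-1) ν^K_3)` -/
def nu3K : V → C := fun X =>
  (1/((2*(n:ℝ)+1) * ((n:ℝ)-1))) •
    ((2*(n:ℝ)-1) • act1 M.I (M.Lam M.I M.betaK) X - M.nu4K X)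

/-- `β^{(E)}_{3I} = -(1/2) Jν^I_3 ∧ ω_J - (1/2) Kν^I_3 ∧ ω_K + (1/(2n-1)) Iν^I_3 ∧ ω_I` -/
def betaE3I : V → V → V → C := fun X Y Z =>
  (-(1/2:ℝ)) • wedge12 (act1 M.J M.nu3I) (M.omega M.J) X Y Z
    + (-(1/2:ℝ)) • wedge12 (act1 M.K M.nu3I) (M.omega M.K) X Y Z
    + (1/(2*(n:ℝ)-1)) • wedge12 (act1 M.I M.nu3I) (M.omega M.I) X Y Z

def betaE3J : V → V → V → C := fun X Y Z =>
  (-(1/2:ℝ)) • wedge12 (act1 M.K M.nu3J) (M.omega M.K) X Y Z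
    + (-(1/2:ℝ)) • wedge12 (act1 M.I M.nu3J) (M.omega M.I) X Y Z
    + (1/(2*(n:ℝ)-1)) • wedge12 (act1 M.J M.nu3J) (M.omega M.J) X Y Z

def betaE3K : V → V → V → C := fun X Y Z =>
  (-(1/2:ℝ)) • wedge12 (act1 M.I M.nu3K) (M.omega M.I) X Y Z
    + (-(1/2:ℝ)) • wedge12 (act1 M.J M.nu3K) (M.omega M.J) X Y Z
    + (1/(2*(n:ℝ)-1)) • wedge12 (act1 M.K M.nu3K) (M.omega M.K) X Y Z

/-- `β_{4I} = -(1/(2n-1)) Iν^I_4 ∧ ω_I` -/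
def beta4I : V → V → V → C := fun X Y Z =>
  (-(1/(2*(n:ℝ)-1))) • wedge12 (act1 M.I M.nu4I) (M.omega M.I) X Y Z

def beta4J : V → V → V → C := fun X Y Z =>
  (-(1/(2*(n:ℝ)-1))) • wedge12 (act1 M.J M.nu4J) (M.omega M.J) X Y Z

def beta4K : V → V → V → C := fun X Y Z =>
  (-(1/(2*(n:ℝ)-1))) • wedge12 (act1 M.K M.nu4K) (M.omega M.K) X Y Z

/-- `β_I^{(3+K)} = β_I - β^{(E)}_{3I} - β_{4I}` -/
def beta3KI : V → V → V → C := fun X Y Z => M.betaI X Y Z - M.betaE3I X Y Z - M.beta4I X Y Z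

def beta3KJ : V → V → V → C := fun X Y Z => M.betaJ X Y Z - M.betaE3J X Y Z - M.beta4J X Y Z

def beta3KK : V → V → V → C := fun X Y Z => M.betaK X Y Z - M.betaE3K X Y Z - M.beta4K X Y Z

/-- `β_I^{(3)} = (1/6) (2 - 𝓛_J - 𝓛_K) β_I^{(3+K)}` -/
def beta3I : V → V → V → C := fun X Y Z =>
  (1/6:ℝ) • ((2:ℝ) • M.beta3KI X Y Z - calL M.J M.beta3KI X Y Z - calL M.K M.beta3KI X Y Z)

def beta3J : V → V → V → C := fun X Y Z =>
  (1/6:ℝ) • ((2:ℝ) • M.beta3KJ X Y Z - calL M.K M.beta3KJ X Y Z - calL M.I M.beta3KJ X Y Z)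

def beta3K : V → V → V → C := fun X Y Z =>
  (1/6:ℝ) • ((2:ℝ) • M.beta3KK X Y Z - calL M.I M.beta3KK X Y Z - calL M.J M.beta3KK X Y Z)

/-- `β_I^{(K)} = (1/6) (4 + 𝓛_J + 𝓛_K) β_I^{(3+K)}` -/
def betaKI : V → V → V → C := fun X Y Z =>
  (1/6:ℝ) • ((4:ℝ) • M.beta3KI X Y Z + calL M.J M.beta3KI X Y Z + calL M.K M.beta3KI X Y Z)

def betaKJ : V → V → V → C := fun X Y Z =>
  (1/6:ℝ) • ((4:ℝ) • M.beta3KJ X Y Z + calL M.K M.beta3KJ X Y Z + calL M.I M.beta3KJ X Y Z)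

def betaKK : V → V → V → C := fun X Y Z =>
  (1/6:ℝ) • ((4:ℝ) • M.beta3KK X Y Z + calL M.I M.beta3KK X Y Z + calL M.J M.beta3KK X Y Z)

/-- the three-form `ψ^{(3)} = (1/12)(β_I^{(3)} + β_J^{(3)} + β_K^{(3)})` determining `ξ_{33}` -/
def psi3 : V → V → V → C := fun X Y Z =>
  (1/12:ℝ) • (M.beta3I X Y Z + M.beta3J X Y Z + M.beta3K X Y Z)

/-- the three-form `ψ^{(K)} = -(1/48)(β_I^{(K)} + β_J^{(K)} + β_K^{(K)})` determining `ξ_{KH}` -/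
def psiK : V → V → V → C := fun X Y Z =>
  (-(1/48:ℝ)) • (M.betaKI X Y Z + M.betaKJ X Y Z + M.betaKK X Y Z)

/-- the three-form `ψ^{(3)}_I` determining `ξ_{3H}` -/
def psi3I : V → V → V → C := fun X Y Z =>
  (-(1/8:ℝ)) • M.beta3I X Y Z
    + (1/48:ℝ) • ((3:ℝ) • (M.beta3I X Y Z + M.beta3J X Y Z + M.beta3K X Y Z)
        + calL M.I (fun a b c => M.beta3I a b c + M.beta3J a b c + M.beta3K a b c) X Y Z)

def psi3J : V → V → V → C := fun X Y Z =>
  (-(1/8:ℝ)) • M.beta3J X Y Z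
    + (1/48:ℝ) • ((3:ℝ) • (M.beta3I X Y Z + M.beta3J X Y Z + M.beta3K X Y Z)
        + calL M.J (fun a b c => M.beta3I a b c + M.beta3J a b c + M.beta3K a b c) X Y Z)

def psi3K : V → V → V → C := fun X Y Z =>
  (-(1/8:ℝ)) • M.beta3K X Y Z
    + (1/48:ℝ) • ((3:ℝ) • (M.beta3I X Y Z + M.beta3J X Y Z + M.beta3K X Y Z)
        + calL M.K (fun a b c => M.beta3I a b c + M.beta3J a b c + M.beta3K a b c) X Y Z)

/-- the three-form `ψ^{(K)}_I` determining `ξ_{K3}` -/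
def psiKI : V → V → V → C := fun X Y Z =>
  (-(1/2:ℝ)) • M.betaKI X Y Z
    + (1/6:ℝ) • (M.betaKI X Y Z + M.betaKJ X Y Z + M.betaKK X Y Z)

def psiKJ : V → V → V → C := fun X Y Z =>
  (-(1/2:ℝ)) • M.betaKJ X Y Z
    + (1/6:ℝ) • (M.betaKI X Y Z + M.betaKJ X Y Z + M.betaKK X Y Z)

def psiKK : V → V → V → C := fun X Y Z =>
  (-(1/2:ℝ)) • M.betaKK X Y Z
    + (1/6:ℝ) • (M.betaKI X Y Z + M.betaKJ X Y Z + M.betaKK X Y Z)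

/-- the one-form `θ^ξ` determining `ξ_{EH}`,
defined by `(6/n)(2n+1)(n-1) θ^ξ(X) = -⟨ξ_{e_i} e_i, X⟩` -/
def thetaXi : V → C := fun X =>
  (-((n:ℝ)/(6*(2*(n:ℝ)+1)*((n:ℝ)-1)))) • ∑ i, M.g (M.xi (M.frame i) (M.frame i)) X

/-- the local one-form `θ^ξ_I`, defined by `(2/n)(2n+1)(n-1) θ^ξ_I(X) = -⟨I ξ_{e_i} I e_i, X⟩` -/
def thetaXiI : V → C := fun X =>
  (-((n:ℝ)/(2*(2*(n:ℝ)+1)*((n:ℝ)-1)))) •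
    ∑ i, M.g (M.I (M.xi (M.frame i) (M.I (M.frame i)))) X

def thetaXiJ : V → C := fun X =>
  (-((n:ℝ)/(2*(2*(n:ℝ)+1)*((n:ℝ)-1)))) •
    ∑ i, M.g (M.J (M.xi (M.frame i) (M.J (M.frame i)))) X

def thetaXiK : V → C := fun X =>
  (-((n:ℝ)/(2*(2*(n:ℝ)+1)*((n:ℝ)-1)))) •
    ∑ i, M.g (M.K (M.xi (M.frame i) (M.K (M.frame i)))) X

/-- `α_I = -λ_I ⊗ g + (1/2)(J_(2) - J_(3)) ∇ω_K` -/
def alphaI : V → V → V → C := fun X Y Z =>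
  -(M.lambdaI X * M.g Y Z)
    + (1/2:ℝ) • (-(M.nab2 (M.omega M.K) X (M.J Y) Z) + M.nab2 (M.omega M.K) X Y (M.J Z))

def alphaJ : V → V → V → C := fun X Y Z =>
  -(M.lambdaJ X * M.g Y Z)
    + (1/2:ℝ) • (-(M.nab2 (M.omega M.I) X (M.K Y) Z) + M.nab2 (M.omega M.I) X Y (M.K Z))

def alphaK : V → V → V → C := fun X Y Z =>
  -(M.lambdaK X * M.g Y Z)
    + (1/2:ℝ) • (-(M.nab2 (M.omega M.J) X (M.I Y) Z) + M.nab2 (M.omega M.J) X Y (M.I Z))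

/-- the one-form `η_I(X) = α_I(e_i; e_i, X)` -/
def etaI : V → C := fun X => ∑ i, M.alphaI (M.frame i) (M.frame i) X

def etaJ : V → C := fun X => ∑ i, M.alphaJ (M.frame i) (M.frame i) X

def etaK : V → C := fun X => ∑ i, M.alphaK (M.frame i) (M.frame i) X

/-- the fundamental four-form `Ω = Σ_A ω_A ∧ ω_A` -/
def Omega4 : V → V → V → V → C := fun X Y Z W =>
  wedge22 (M.omega M.I) (M.omega M.I) X Y Z W
    + wedge22 (M.omega M.J) (M.omega M.J) X Y Z W
    + wedge22 (M.omega M.K) (M.omega M.K) X Y Z W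

/-- the one-form `θ^{d*Ω} = (1/3) Σ_A A Λ_A d*Ω` -/
def thetaDOmega : V → C := fun X =>
  (1/3:ℝ) • (act1 M.I (M.Lam M.I (M.codiff4 M.Omega4)) X
    + act1 M.J (M.Lam M.J (M.codiff4 M.Omega4)) X
    + act1 M.K (M.Lam M.K (M.codiff4 M.Omega4)) X)

/-- the vector-valued torsion: `g(W, T(X,Y)) = T(W,X,Y)` -/
def Tvec (T : V → V → V → C) : V → V → V := fun X Y => ∑ i, T (M.frame i) X Y • M.frame i

/-- the connection `∇ + (1/2) T` associated to a torsion (0,3)-tensor `T` -/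
def nabT (T : V → V → V → C) : V → V → V := fun X Y => M.nab X Y + (1/2:ℝ) • M.Tvec T X Y

/-- a connection is metric -/
def MetricConn (nab' : V → V → V) : Prop :=
  ∀ X Y Z, M.D X (M.g Y Z) = M.g (nab' X Y) Z + M.g Y (nab' X Z)

/-- a connection is quaternionic, with associated local one-forms `γ_I, γ_J, γ_K`:
`∇'_X I = γ_K(X) J - γ_J(X) K`, and cyclically -/
def QuatConn (nab' : V → V → V) (γI γJ γK : V → C) : Prop :=
  (∀ X Y, nab' X (M.I Y) - M.I (nab' X Y) = γK X • M.J Y - γJ X • M.K Y) ∧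
  (∀ X Y, nab' X (M.J Y) - M.J (nab' X Y) = γI X • M.K Y - γK X • M.I Y) ∧
  (∀ X Y, nab' X (M.K Y) - M.K (nab' X Y) = γJ X • M.I Y - γI X • M.J Y)

/-- the HKT condition: `I, J, K` integrable and there is a metric connection
`∇ + (1/2)T` with totally skew torsion making `I, J, K` parallel -/
def IsHKT : Prop :=
  (∀ X Y, M.nijV M.I X Y = 0) ∧ (∀ X Y, M.nijV M.J X Y = 0) ∧
  (∀ X Y, M.nijV M.K X Y = 0) ∧
  ∃ T : V → V → V → C, IsAlt3 T ∧ Lin3 T ∧ M.MetricConn (M.nabT T) ∧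
    (∀ X Y, M.nabT T X (M.I Y) = M.I (M.nabT T X Y)) ∧
    (∀ X Y, M.nabT T X (M.J Y) = M.J (M.nabT T X Y)) ∧
    (∀ X Y, M.nabT T X (M.K Y) = M.K (M.nabT T X Y))

/-- membership of a three-form in `KH`: type `{2,1}` for each `A` and `Λ_A ψ = 0` -/
def InKH3 (ψ : V → V → V → C) : Prop :=
  IsAlt3 ψ ∧ Lin3 ψ ∧
  calL M.I ψ = ψ ∧ calL M.J ψ = ψ ∧ calL M.K ψ = ψ ∧
  M.Lam M.I ψ = 0 ∧ M.Lam M.J ψ = 0 ∧ M.Lam M.K ψ = 0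

/-- the `(0,3)`-tensor of the `KH`-component of the torsion determined by `ψ^{(K)}`:
`3ψ - Σ_A A_(23) ψ` -/
def xiKH3 (ψ : V → V → V → C) : V → V → V → C := fun X Y Z =>
  (3:ℝ) • ψ X Y Z - (op23 M.I ψ X Y Z + op23 M.J ψ X Y Z + op23 M.K ψ X Y Z)

/-- the `(0,3)`-tensor of the `EH`-component of the torsion determined by the
one-form `θ`: `3 e_i ⊗ e_i ∧ θ - Σ_A (e_i ⊗ A e_i ∧ A θ + (2/n) A θ ⊗ ω_A)` -/
def xiEH3 (θ : V → C) : V → V → V → C := fun X Y Z =>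
  (3:ℝ) • ∑ i, M.g (M.frame i) X *
      (M.g (M.frame i) Y * θ Z - M.g (M.frame i) Z * θ Y)
  - ((∑ i, M.g (M.frame i) X *
        (M.g (M.I (M.frame i)) Y * act1 M.I θ Z - M.g (M.I (M.frame i)) Z * act1 M.I θ Y))
    + (∑ i, M.g (M.frame i) X *
        (M.g (M.J (M.frame i)) Y * act1 M.J θ Z - M.g (M.J (M.frame i)) Z * act1 M.J θ Y))
    + (∑ i, M.g (M.frame i) X *
        (M.g (M.K (M.frame i)) Y * act1 M.K θ Z - M.g (M.K (M.frame i)) Z * act1 M.K θ Y)))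
  - (2/(n:ℝ)) • (act1 M.I θ X * M.omega M.I Y Z + act1 M.J θ X * M.omega M.J Y Z
      + act1 M.K θ X * M.omega M.K Y Z)

/-- the intrinsic torsion lies in `(K+E)H`: it is the sum of a `KH`-tensor and an
`EH`-tensor as described in §3 of the paper -/
def inKEH : Prop :=
  ∃ (ψ : V → V → V → C) (θ : V → C), M.InKH3 ψ ∧ Lin1 θ ∧
    ∀ X Y Z, M.g Y (M.xi X Z) = M.xiKH3 ψ X Y Z + M.xiEH3 θ X Y Z

end derived

end AQH

namespace AQH

section helpers

variable {n : ℕ} {C V : Type*} [CommRing C] [Algebra ℝ C] [AddCommGroup V] [Module C V]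
variable (M : AQH n C V)

/-- an orthogonal almost complex structure -/
structure Cpx (A : V → V) : Prop where
  lin : ∀ (f : C) X Y, A (f • X + Y) = f • A X + A Y
  sq : ∀ X, A (A X) = -X
  skew : ∀ X Y, M.g (A X) Y = -M.g X (A Y)

theorem half_cancel {x : C} (h : x + x = 0) : x = 0 := by
  have h2 : (1/2 : ℝ) • (x + x) = x := by
    rw [← two_smul ℝ x, smul_smul]; norm_num
  rw [← h2, h, smul_zero]

theorem g_zero' (Y : V) : M.g 0 Y = 0 := by
  have := M.g_smul 0 0 Y
  simpa using this

theorem g_neg' (X Y : V) : M.g (-X) Y = -M.g X Y := by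
  have := M.g_smul (-1) X Y
  simpa using this

theorem g_sub' (X Y Z : V) : M.g (X - Y) Z = M.g X Z - M.g Y Z := by
  rw [sub_eq_add_neg, M.g_add, g_neg', sub_eq_add_neg]

theorem g_addr (X Y Z : V) : M.g X (Y + Z) = M.g X Y + M.g X Z := by
  rw [M.g_symm, M.g_add, M.g_symm Y, M.g_symm Z]

theorem g_smulr (f : C) (X Y : V) : M.g X (f • Y) = f * M.g X Y := by
  rw [M.g_symm, M.g_smul, M.g_symm Y]

theorem g_negr (X Y : V) : M.g X (-Y) = -M.g X Y := by
  rw [M.g_symm, g_neg', M.g_symm Y]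

theorem g_subr (X Y Z : V) : M.g X (Y - Z) = M.g X Y - M.g X Z := by
  rw [sub_eq_add_neg, g_addr, g_negr, sub_eq_add_neg]

theorem nab_neg' (X Y : V) : M.nab X (-Y) = -M.nab X Y := by
  have h0 : M.nab X 0 = 0 := by simpa using M.nab_add X 0 0
  have h := M.nab_add X Y (-Y)
  rw [add_neg_cancel, h0] at h
  exact (neg_eq_of_add_eq_zero_right h.symm).symm

theorem D_zero' (X : V) : M.D X 0 = 0 := by
  simpa using M.D_const X 0

theorem D_neg' (X : V) (f : C) : M.D X (-f) = -M.D X f := by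
  have h := M.D_add X f (-f)
  rw [add_neg_cancel, D_zero'] at h
  exact (neg_eq_of_add_eq_zero_right h.symm).symm

variable {M}

theorem Cpx.zero {A : V → V} (hA : Cpx M A) : A 0 = 0 := by
  have := hA.lin 1 0 0
  simpa using this

theorem Cpx.add {A : V → V} (hA : Cpx M A) (X Y : V) : A (X + Y) = A X + A Y := by
  have := hA.lin 1 X Y
  simpa using this

theorem Cpx.smul {A : V → V} (hA : Cpx M A) (f : C) (X : V) : A (f • X) = f • A X := by
  have := hA.lin f X 0
  simpa [hA.zero] using this

theorem Cpx.neg {A : V → V} (hA : Cpx M A) (X : V) : A (-X) = -A X := by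
  have := hA.smul (-1) X
  simpa using this

theorem Cpx.sub {A : V → V} (hA : Cpx M A) (X Y : V) : A (X - Y) = A X - A Y := by
  rw [sub_eq_add_neg, hA.add, hA.neg, sub_eq_add_neg]

theorem nab2_omega {A : V → V} (X Y Z : V) :
    M.nab2 (M.omega A) X Y Z = M.g Y (M.nabA A X Z) := by
  simp only [nab2, omega, nabA, M.nab_metric, g_subr]
  ring

theorem nabA_lin {A : V → V} (hA : Cpx M A) (X : V) (f : C) (Y Z : V) :
    M.nabA A X (f • Y + Z) = f • M.nabA A X Y + M.nabA A X Z := by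
  simp only [nabA, hA.lin, M.nab_add, M.nab_leibniz, hA.add, hA.smul]
  module

theorem nabA_zero {A : V → V} (hA : Cpx M A) (X : V) : M.nabA A X 0 = 0 := by
  have := nabA_lin hA X 1 0 0
  simpa using this

theorem nabA_neg {A : V → V} (hA : Cpx M A) (X Y : V) : M.nabA A X (-Y) = -M.nabA A X Y := by
  have := nabA_lin hA X (-1) Y 0
  simpa [nabA_zero hA] using this

/-- `∇A` is skew. -/
theorem nabA_skew {A : V → V} (hA : Cpx M A) (X Y Z : V) :
    M.g Y (M.nabA A X Z) = -M.g Z (M.nabA A X Y) := by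
  have h1 : M.D X (M.g Y (A Z)) = -M.D X (M.g Z (A Y)) := by
    rw [← D_neg', M.g_symm Y, hA.skew]
  rw [M.nab_metric, M.nab_metric] at h1
  simp only [nabA, g_subr]
  have h2 := hA.skew (M.nab X Y) Z
  have h3 := hA.skew (M.nab X Z) Y
  rw [M.g_symm] at h2 h3
  linear_combination h1 - h2 - h3

theorem d2_omega {A : V → V} (hA : Cpx M A) (X Y Z : V) :
    M.d2 (M.omega A) X Y Z
      = M.g Y (M.nabA A X Z) + M.g Z (M.nabA A Y X) + M.g X (M.nabA A Z Y) := by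
  rw [nabA_skew hA Y Z X]
  simp only [d2, omega, nabA, g_subr, M.nab_metric, ← M.torsion_free, g_sub']
  have s : ∀ U W, M.g U (A W) = -M.g W (A U) := fun U W => by rw [M.g_symm, hA.skew]
  linear_combination s (M.nab X Z) Y - s (M.nab Y Z) X + s (M.nab Z Y) X 

theorem sum_lin {φ : V → C} (h : ∀ (f : C) X Y, φ (f • X + Y) = f * φ X + φ Y) (X : V) :
    ∑ i, φ (M.frame i) * M.g (M.frame i) X = φ X := by
  have h0 : φ 0 = 0 := by simpa using h 1 0 0
  have ha : ∀ X Y, φ (X + Y) = φ X + φ Y := fun X Y => by simpa using h 1 X Y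
  have hs : ∀ (f : C) X, φ (f • X) = f * φ X := fun f X => by simpa [h0] using h f X 0
  let Φ : V →ₗ[C] C := { toFun := φ, map_add' := ha, map_smul' := hs }
  have : φ X = Φ (∑ i, M.g X (M.frame i) • M.frame i) := by
    rw [← M.frame_span X]; rfl
  rw [this, map_sum]
  refine Finset.sum_congr rfl fun i _ => ?_
  rw [map_smul, smul_eq_mul, mul_comm, M.g_symm]
  rfl

/-- the trace term -/
def trS (M : AQH n C V) (A B : V → V) (X : V) : C :=
  ∑ j, M.g X (M.nabA A (M.frame j) (B (M.frame j)))

theorem contr {A B : V → V} (hA : Cpx M A) (X : V) :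
    ∑ i, ∑ j, M.g X (M.nabA A (M.frame j) (M.frame i)) * M.omega B (M.frame i) (M.frame j)
      = trS M A B X := by
  rw [Finset.sum_comm]
  refine Finset.sum_congr rfl fun j _ => ?_
  exact sum_lin (φ := fun Z => M.g X (M.nabA A (M.frame j) Z))
    (fun f Y Z => by simp only [nabA_lin hA, g_addr, g_smulr]) (B (M.frame j))

theorem Lam_d2 {A B : V → V} (hA : Cpx M A) (hB : Cpx M B) (X : V) :
    M.Lam B (M.d2 (M.omega A)) X
      = M.inner2 (fun Y Z => M.nab2 (M.omega A) X Y Z) (M.omega B) + trS M A B X := by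
  have h1 : ∑ i, ∑ j, M.g (M.frame j) (M.nabA A (M.frame i) X) *
      M.omega B (M.frame i) (M.frame j) = trS M A B X := by
    rw [← contr hA, Finset.sum_comm]
    refine Finset.sum_congr rfl fun i _ => Finset.sum_congr rfl fun j _ => ?_
    rw [nabA_skew hA, omega, omega, M.g_symm (M.frame j), hB.skew]
    ring
  simp only [Lam, inner2, d2_omega hA, nab2_omega, add_mul, Finset.sum_add_distrib, h1,
    contr hA, smul_add]
  rw [add_assoc, ← add_smul]
  norm_num

theorem inner2_tr {A B : V → V} (hA : Cpx M A) (X : V) :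
    M.inner2 (fun Y Z => M.nab2 (M.omega A) X Y Z) (M.omega B)
      = (1/2 : ℝ) • ∑ j, M.g (B (M.frame j)) (M.nabA A X (M.frame j)) := by
  simp only [inner2, nab2_omega, omega]
  rw [Finset.sum_comm]
  congr 1
  refine Finset.sum_congr rfl fun j _ => ?_
  exact sum_lin (φ := fun Z => M.g Z (M.nabA A X (M.frame j)))
    (fun f Y Z => by simp only [M.g_add, M.g_smul]) (B (M.frame j))

theorem inner2_self {A : V → V} (hA : Cpx M A) (X : V) :
    M.inner2 (fun Y Z => M.nab2 (M.omega A) X Y Z) (M.omega A) = 0 := by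
  rw [inner2_tr hA, Finset.sum_eq_zero, smul_zero]
  intro j _
  generalize M.frame j = e
  apply half_cancel
  have h : M.D X (M.g (A e) (A e)) = M.D X (M.g e e) := by
    rw [hA.skew, hA.sq, g_negr, neg_neg]
  rw [M.nab_metric, M.nab_metric] at h
  have h2 := hA.skew (A e) (M.nab X e)
  rw [hA.sq, g_neg'] at h2
  rw [M.g_symm (M.nab X (A e)), M.g_symm (M.nab X e)] at h
  simp only [nabA, g_subr]
  linear_combination h - 2 * h2

theorem inner2_pair {A B : V → V} (hA : Cpx M A) (hB : Cpx M B)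
    (hAB : ∀ X, A (B X) = -B (A X)) (X : V) :
    M.inner2 (fun Y Z => M.nab2 (M.omega A) X Y Z) (M.omega B)
      + M.inner2 (fun Y Z => M.nab2 (M.omega B) X Y Z) (M.omega A) = 0 := by
  rw [inner2_tr hA, inner2_tr hB, ← smul_add, ← Finset.sum_add_distrib, Finset.sum_eq_zero,
    smul_zero]
  intro j _
  generalize M.frame j = e
  have h : M.g (A e) (B e) = 0 := by
    apply half_cancel
    have h1 := hA.skew e (B e)
    have h2 := hB.skew e (A e)
    rw [hAB, g_negr] at h1
    rw [M.g_symm] at h2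
    linear_combination h1 + h2
  have h' : M.D X (M.g (A e) (B e)) = 0 := by rw [h, D_zero']
  rw [M.nab_metric, M.g_symm (M.nab X (A e))] at h'
  have h1 := hA.skew (B e) (M.nab X e)
  have h2 := hB.skew (A e) (M.nab X e)
  rw [hAB, g_neg'] at h1
  simp only [nabA, g_subr]
  linear_combination h' - h1 - h2

/-- `∇(AB) = (∇A) B + A ∇B` -/
theorem nabA_comp {A B E : V → V} (hA : Cpx M A) (hE : ∀ X, E X = A (B X)) (X Y : V) :
    M.nabA E X Y = M.nabA A X (B Y) + A (M.nabA B X Y) := by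
  simp only [nabA, hE, hA.sub]
  abel

theorem scale_cancel (s : C) (h : n = 0 → s = 0) :
    (2*(n:ℝ)) • ((1/(2*(n:ℝ))) • s) = s := by
  by_cases hn : n = 0
  · simp [h hn]
  · have : (n:ℝ) ≠ 0 := by exact_mod_cast hn
    rw [smul_smul, mul_one_div_cancel (by positivity), one_smul]

theorem inner2_n0 (ψ φ : V → V → C) (hn : n = 0) : M.inner2 ψ φ = 0 := by
  subst hn
  unfold inner2
  have : (Finset.univ : Finset (Fin (4 * 0))) = ∅ := rfl
  rw [this]; simp

/-- the two formulas for a general quaternionic triple -/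
theorem main_triple {I J K : V → V} (hI : Cpx M I) (hJ : Cpx M J) (hK : Cpx M K)
    (hIJ : ∀ X, K X = I (J X)) (hJK : ∀ X, I X = J (K X)) (hKI : ∀ X, J X = K (I X))
    (l : V → C)
    (hl : ∀ X, l X = (1/(2*(n:ℝ))) •
      M.inner2 (fun Y Z => M.nab2 (M.omega J) X Y Z) (M.omega K)) :
    ((2*(n:ℝ)) • act1 I l
      = act1 I (M.Lam K (M.d2 (M.omega J)))
        + act1 J (M.Lam K (M.d2 (M.omega I)))
        + act1 J (M.Lam I (M.d2 (M.omega K)))) ∧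
    ((2*(n:ℝ)) • act1 I l
      = act1 I (M.Lam K (M.d2 (M.omega J)))
        + M.Lam I (M.d2 (M.omega I))
        - M.Lam K (M.d2 (M.omega K))) := by
  have hIK : ∀ X, I (K X) = -J X := fun X => by rw [hIJ, hI.sq]
  have hKIs : ∀ X, I (K X) = -K (I X) := fun X => by rw [hIK, hKI]
  have key : ∀ X, trS M J K (I X) = trS M I I X - trS M K K X := by
    intro X
    simp only [trS, ← Finset.sum_sub_distrib]
    refine Finset.sum_congr rfl fun j _ => ?_
    generalize M.frame j = e
    have h := nabA_comp hI hIJ e (K e)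
    rw [← hJK] at h
    rw [hI.skew, h, g_addr]
    ring
  have key2 : ∀ X, trS M I K (J X) + trS M K I (J X) = trS M K K X - trS M I I X := by
    intro X
    simp only [trS, ← Finset.sum_sub_distrib, ← Finset.sum_add_distrib]
    refine Finset.sum_congr rfl fun j _ => ?_
    generalize M.frame j = e
    have hJI : ∀ X, (fun Y => -K Y) X = J (I X) := fun X => by
      show -K X = _
      rw [hJK X, hJ.sq]
    have h1 := nabA_comp hJ hJI e (K e)
    have h1' : M.nabA (fun Y => -K Y) e (K e) = -M.nabA K e (K e) := by
      simp only [nabA, nab_neg']; abel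
    rw [h1', hIK, nabA_neg hJ] at h1
    have h2 := nabA_comp hJ hJK e (I e)
    rw [← hKI] at h2
    have e1 := congrArg (M.g X) h1
    have e2 := congrArg (M.g X) h2
    rw [g_addr] at e1 e2
    rw [g_negr, g_negr] at e1
    rw [hJ.skew, hJ.skew]
    linear_combination e1 + e2
  have hL : ∀ X, (2*(n:ℝ)) • l X
      = M.inner2 (fun Y Z => M.nab2 (M.omega J) X Y Z) (M.omega K) := fun X => by
    rw [hl, scale_cancel _ (inner2_n0 _ _)]
  constructor
  · funext X
    simp only [Pi.smul_apply, Pi.add_apply, act1, smul_neg, hL, Lam_d2 hI hK, Lam_d2 hJ hK,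
      Lam_d2 hK hI]
    linear_combination key X + key2 X + inner2_pair hI hK hKIs (J X)
  · funext X
    simp only [Pi.smul_apply, Pi.add_apply, Pi.sub_apply, act1, smul_neg, hL, Lam_d2 hI hI,
      Lam_d2 hJ hK, Lam_d2 hK hK, inner2_self hI, inner2_self hK]
    linear_combination key X

theorem skew_of_metric {A : V → V} (hs : ∀ X, A (A X) = -X)
    (hm : ∀ X Y, M.g (A X) (A Y) = M.g X Y) (X Y : V) : M.g (A X) Y = -M.g X (A Y) := by
  have h := hm X (A Y)
  rw [hs, g_negr] at h
  rw [← h, neg_neg]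

theorem cpxI (M : AQH n C V) : Cpx M M.I := ⟨M.I_lin, M.I_sq, skew_of_metric M.I_sq M.I_metric⟩

theorem cpxJ (M : AQH n C V) : Cpx M M.J := ⟨M.J_lin, M.J_sq, skew_of_metric M.J_sq M.J_metric⟩

theorem rel_JK (M : AQH n C V) (X : V) : M.I X = M.J (M.K X) := by
  have h := M.anticomm (M.J X)
  rw [M.J_sq, (cpxI M).neg] at h
  rw [M.K_def, ← neg_neg (M.I X), h, neg_neg]

theorem rel_KI (M : AQH n C V) (X : V) : M.J X = M.K (M.I X) := by
  rw [M.K_def, ← neg_neg (M.J (M.I X)), ← M.anticomm, (cpxI M).neg, M.I_sq, neg_neg]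

theorem cpxK (M : AQH n C V) : Cpx M M.K := by
  have hs : ∀ X, M.K (M.K X) = -X := fun X => by
    rw [M.K_def (M.K X), ← rel_JK, M.I_sq]
  exact ⟨M.K_lin, hs, skew_of_metric hs fun X Y => by
    rw [M.K_def, M.K_def, M.I_metric, M.J_metric]⟩

end helpers

end AQH

open AQH in
/-- On an almost quaternion-Hermitian `4n`-manifold, for any
local adapted basis `I, J, K`:
`2n Iλ_I = IΛ_K dω_J + JΛ_K dω_I + JΛ_I dω_K = IΛ_K dω_J + Λ_I dω_I - Λ_K dω_K`,
together with the formulas obtained by cyclic permutation of `(I, J, K)`. -/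
theorem statement4 {n : ℕ} {C V : Type*} [CommRing C] [Algebra ℝ C] [AddCommGroup V]
    [Module C V] [Module ℝ V] [IsScalarTower ℝ C V] (M : AQH n C V) :
    -- the formula for I λ_I
    ((2*(n:ℝ)) • act1 M.I M.lambdaI
      = act1 M.I (M.Lam M.K (M.d2 (M.omega M.J)))
        + act1 M.J (M.Lam M.K (M.d2 (M.omega M.I)))
        + act1 M.J (M.Lam M.I (M.d2 (M.omega M.K)))) ∧
    ((2*(n:ℝ)) • act1 M.I M.lambdaI
      = act1 M.I (M.Lam M.K (M.d2 (M.omega M.J)))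
        + M.Lam M.I (M.d2 (M.omega M.I))
        - M.Lam M.K (M.d2 (M.omega M.K))) ∧
    -- the formula for J λ_J (cyclic permutation I → J → K → I)
    ((2*(n:ℝ)) • act1 M.J M.lambdaJ
      = act1 M.J (M.Lam M.I (M.d2 (M.omega M.K)))
        + act1 M.K (M.Lam M.I (M.d2 (M.omega M.J)))
        + act1 M.K (M.Lam M.J (M.d2 (M.omega M.I)))) ∧
    ((2*(n:ℝ)) • act1 M.J M.lambdaJ
      = act1 M.J (M.Lam M.I (M.d2 (M.omega M.K)))
        + M.Lam M.J (M.d2 (M.omega M.J))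
        - M.Lam M.I (M.d2 (M.omega M.I))) ∧
    -- the formula for K λ_K
    ((2*(n:ℝ)) • act1 M.K M.lambdaK
      = act1 M.K (M.Lam M.J (M.d2 (M.omega M.I)))
        + act1 M.I (M.Lam M.J (M.d2 (M.omega M.K)))
        + act1 M.I (M.Lam M.K (M.d2 (M.omega M.J)))) ∧
    ((2*(n:ℝ)) • act1 M.K M.lambdaK
      = act1 M.K (M.Lam M.J (M.d2 (M.omega M.I)))
        + M.Lam M.K (M.d2 (M.omega M.K))
        - M.Lam M.J (M.d2 (M.omega M.J))) := by
  have h1 := main_triple (cpxI M) (cpxJ M) (cpxK M) M.K_def (rel_JK M) (rel_KI M)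
    M.lambdaI (fun _ => rfl)
  have h2 := main_triple (cpxJ M) (cpxK M) (cpxI M) (rel_JK M) (rel_KI M) M.K_def
    M.lambdaJ (fun _ => rfl)
  have h3 := main_triple (cpxK M) (cpxI M) (cpxJ M) (rel_KI M) M.K_def (rel_JK M)
    M.lambdaK (fun _ => rfl)
  exact ⟨h1.1, h1.2, h2.1, h2.2, h3.1, h3.2⟩
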